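/- Let k ≥ 2 be an integer and let N be a seminorm on ℝ^k such that N(e_i − e_j) ≤ 1 for all i ≠ j, where e_1, …, e_k are the standard basis vectors. Then for all x, y in the standard simplex Δ_k, N(x − y) ≤ (1/2)·∑_{i=1}^k |x_i − y_i|. (In words: among all norm-based relaxations in the simplex, half the L1 norm assigns the greatest length to every embedded edge.) -/

import Mathlib

/-- Among all seminorms `N` on `ℝ^k` with `N(e_i - e_j) ≤ 1` for `i ≠ j`,
the value on the difference of two points of the standard simplex is at most half the
`L1` distance. -/
theorem seminorm_le_half_L1 (k : ℕ) (hk : 2 ≤ k) (N : Seminorm ℝ (Fin k → ℝ))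
    (hN : ∀ i j : Fin k, i ≠ j → N (Pi.single i 1 - Pi.single j 1) ≤ 1)
    (x y : Fin k → ℝ) (hx : x ∈ stdSimplex ℝ (Fin k)) (hy : y ∈ stdSimplex ℝ (Fin k)) :
    N (x - y) ≤ (1 / 2) * ∑ i, |x i - y i| := by
  obtain ⟨p, hp⟩ : ∃ p : Fin k → ℝ, ∀ i, p i = (|x i - y i| + (x i - y i)) / 2 :=
    ⟨_, fun _ => rfl⟩
  obtain ⟨q, hq⟩ : ∃ q : Fin k → ℝ, ∀ i, q i = (|x i - y i| - (x i - y i)) / 2 :=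
    ⟨_, fun _ => rfl⟩
  obtain ⟨D, hD⟩ : ∃ D : ℝ, D = (1 / 2) * ∑ i, |x i - y i| := ⟨_, rfl⟩
  have hp0 : ∀ i, 0 ≤ p i := fun i => by
    rw [hp]; linarith [neg_abs_le (x i - y i)]
  have hq0 : ∀ i, 0 ≤ q i := fun i => by
    rw [hq]; linarith [le_abs_self (x i - y i)]
  have hs : ∑ i, (x i - y i) = 0 := by
    rw [Finset.sum_sub_distrib, hx.2, hy.2, sub_self]
  have hpD : ∑ i, p i = D := by
    simp only [hp]
    rw [← Finset.sum_div, Finset.sum_add_distrib, hs, hD]; ring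
  have hqD : ∑ i, q i = D := by
    simp only [hq]
    rw [← Finset.sum_div, Finset.sum_sub_distrib, hs, hD]; ring
  have hD0 : 0 ≤ D := hpD ▸ Finset.sum_nonneg fun i _ => hp0 i
  have hN' : ∀ i j : Fin k, N (Pi.single i 1 - Pi.single j 1) ≤ 1 := fun i j => by
    by_cases h : i = j
    · subst h; simp
    · exact hN i j h
  rw [← hD]
  rcases hD0.eq_or_lt with h0 | hpos
  · have hpz := (Finset.sum_eq_zero_iff_of_nonneg fun i _ => hp0 i).1 (hpD.trans h0.symm)
    have hqz := (Finset.sum_eq_zero_iff_of_nonneg fun i _ => hq0 i).1 (hqD.trans h0.symm)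
    have : x - y = 0 := by
      ext i
      have h1 := hpz i (Finset.mem_univ i)
      have h2 := hqz i (Finset.mem_univ i)
      rw [hp] at h1
      rw [hq] at h2
      simp only [Pi.sub_apply, Pi.zero_apply]
      linarith
    rw [this, map_zero]; exact hD0
  · have key : D • (x - y) =
        ∑ i, ∑ j, (p i * q j) • (Pi.single i 1 - Pi.single j 1 : Fin k → ℝ) := by
      ext l
      simp only [Finset.sum_apply, Pi.smul_apply, Pi.sub_apply, smul_eq_mul, mul_sub,
        Finset.sum_sub_distrib, Pi.single_apply, mul_ite, mul_one, mul_zero]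
      simp only [Finset.sum_ite_eq, Finset.mem_univ, if_true]
      rw [Finset.sum_comm]
      simp only [Finset.sum_ite_eq, Finset.mem_univ, if_true]
      rw [← Finset.mul_sum, ← Finset.sum_mul, hpD, hqD, hp, hq]
      ring
    have h1 : N (D • (x - y)) ≤ D * D := by
      rw [key]
      calc _ ≤ ∑ i, N (∑ j, (p i * q j) • (Pi.single i 1 - Pi.single j 1 : Fin k → ℝ)) :=
            Finset.le_sum_of_subadditive N (map_zero N).le (map_add_le_add N) _ _
        _ ≤ ∑ i, ∑ j, N ((p i * q j) • (Pi.single i 1 - Pi.single j 1 : Fin k → ℝ)) :=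
            Finset.sum_le_sum fun i _ => Finset.le_sum_of_subadditive N (map_zero N).le (map_add_le_add N) _ _
        _ ≤ ∑ i, ∑ j, p i * q j := by
            refine Finset.sum_le_sum fun i _ => Finset.sum_le_sum fun j _ => ?_
            have h := mul_nonneg (hp0 i) (hq0 j)
            rw [map_smul_eq_mul, Real.norm_of_nonneg h]
            exact mul_le_of_le_one_right h (hN' i j)
        _ = D * D := by
            rw [← Finset.sum_mul_sum, hpD, hqD]
    rw [map_smul_eq_mul, Real.norm_of_nonneg hD0] at h1
    exact le_of_mul_le_mul_left h1 hpos
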